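/- Suppose a is contained in the Jacobson radical of R and cd(a,M) = ara(a,M). Assume r := grade(a,M) < c := cd(a,M) and H^i_a(M) = 0 for all i ≠ r, c. Then the following are equivalent: (i) M is a-relative surjective Buchsbaum; (ii) M is a-relative Buchsbaum; (iii) M is a-relative quasi Buchsbaum. -/

import Mathlib

/-!
Formalization of a statement from "A theory of relative generalized Cohen-Macaulay modules"
by Divaani-Aazar, Ghanbari Doust, Tousi and Zakeri.

Throughout, `R` is a commutative Noetherian ring and `M` a finitely generated `R`-module.
Conventions used below:
* `locH I i M` is the local cohomology module `H^i_I(M)` (Mathlib's `localCohomology`).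
* Conditions `cd(I,M) = c`, `ara(I,M) = n`, `f_I(M) = f`, `grade(I,M) = r` are expressed by
  the predicates `IsCd`, `IsAra`, `IsFinDim`, `IsGrade`.
* Sequences are given as functions `Fin r → R`; `pSpan M x i = ⟨x_0,…,x_{i-1}⟩M`.
* Koszul (co)homology is defined via the explicit (co)chain complex on the `p`-element
  subsets of `{0,…,n-1}`, and the canonical map `λ^i` into local cohomology is the structure
  map (at exponent 1) into the direct limit of Koszul cohomologies of powers of the sequence,
  which is the realization of `H^i_{⟨x⟩}(M)` used in the paper (2.1(iv)).
-/

open CategoryTheory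

noncomputable section

variable {R : Type} [CommRing R]

/-! ### Sequences: prefix spans, weak sequences, filter regular sequences, d-sequences -/

/-- `pSpan M x i` is the submodule `⟨x_0, …, x_{i-1}⟩M` of `M`. -/
def pSpan (M : Type) [AddCommGroup M] [Module R M] {r : ℕ} (x : Fin r → R) (i : Fin r) :
    Submodule R M :=
  Ideal.span (x '' {j | j < i}) • (⊤ : Submodule R M)

/-- `x_1, …, x_r` is an `I`-weak sequence on `M`:
`(⟨x_1,…,x_{i-1}⟩M :_M x_i) ⊆ (⟨x_1,…,x_{i-1}⟩M :_M I)` for all `i`. -/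
def IsWeakSeq (I : Ideal R) (M : Type) [AddCommGroup M] [Module R M] {r : ℕ}
    (x : Fin r → R) : Prop :=
  ∀ i : Fin r, ∀ m : M, x i • m ∈ pSpan M x i → ∀ a ∈ I, a • m ∈ pSpan M x i

/-- `x_1, …, x_r` is an `I`-filter regular sequence on `M`:
`(⟨x_1,…,x_{i-1}⟩M :_M x_i) ⊆ ⋃ₜ (⟨x_1,…,x_{i-1}⟩M :_M I^t)` for all `i`. -/
def IsFilterRegSeq (I : Ideal R) (M : Type) [AddCommGroup M] [Module R M] {r : ℕ}
    (x : Fin r → R) : Prop :=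
  ∀ i : Fin r, ∀ m : M, x i • m ∈ pSpan M x i →
    ∃ t : ℕ, ∀ a ∈ I ^ t, a • m ∈ pSpan M x i

/-- An unconditioned `I`-filter regular sequence: filter regular in any order. -/
def IsUncondFilterRegSeq (I : Ideal R) (M : Type) [AddCommGroup M] [Module R M] {r : ℕ}
    (x : Fin r → R) : Prop :=
  ∀ σ : Equiv.Perm (Fin r), IsFilterRegSeq I M (x ∘ σ)

/-- An unconditioned `I`-weak sequence: all positive powers, in any order, form an
`I`-weak sequence. -/
def IsUncondWeakSeq (I : Ideal R) (M : Type) [AddCommGroup M] [Module R M] {r : ℕ}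
    (x : Fin r → R) : Prop :=
  ∀ σ : Equiv.Perm (Fin r), ∀ α : Fin r → ℕ, (∀ k, 0 < α k) →
    IsWeakSeq I M fun k => x (σ k) ^ α k

/-- `x_1, …, x_r` is a d-sequence on `M`:
`(⟨x_1,…,x_{i-1}⟩M :_M x_i x_j) = (⟨x_1,…,x_{i-1}⟩M :_M x_j)` for all `i ≤ j`. -/
def IsDSeq (M : Type) [AddCommGroup M] [Module R M] {r : ℕ} (x : Fin r → R) : Prop :=
  ∀ i j : Fin r, i ≤ j → ∀ m : M,
    ((x i * x j) • m ∈ pSpan M x i ↔ x j • m ∈ pSpan M x i)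

/-- An u.s.d-sequence on `M`: all positive powers, in any order, form a d-sequence. -/
def IsUSDSeq (M : Type) [AddCommGroup M] [Module R M] {r : ℕ} (x : Fin r → R) : Prop :=
  ∀ σ : Equiv.Perm (Fin r), ∀ α : Fin r → ℕ, (∀ k, 0 < α k) →
    IsDSeq M fun k => x (σ k) ^ α k

/-! ### Local cohomology, cohomological dimension, arithmetic rank -/

/-- The `i`-th local cohomology module `H^i_I(M)`. -/
abbrev locH (I : Ideal R) (i : ℕ) (M : Type) [AddCommGroup M] [Module R M] : ModuleCat R :=
  (localCohomology I i).obj (ModuleCat.of R M)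

/-- `cd(I, M) = c`: the cohomological dimension of `I` on `M` equals `c`, i.e.
`H^c_I(M) ≠ 0` and `H^i_I(M) = 0` for all `i > c`. -/
def IsCd (I : Ideal R) (M : Type) [AddCommGroup M] [Module R M] (c : ℕ) : Prop :=
  Nontrivial (locH I c M) ∧ ∀ i : ℕ, c < i → Subsingleton (locH I i M)

/-- `f_I(M) = f`: the `I`-finiteness dimension of `M` equals `f`, i.e. `f` is the least
integer such that `H^f_I(M)` is not finitely generated. -/
def IsFinDim (I : Ideal R) (M : Type) [AddCommGroup M] [Module R M] (f : ℕ) : Prop :=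
  (∀ i : ℕ, i < f → Module.Finite R (locH I i M)) ∧ ¬ Module.Finite R (locH I f M)

/-- `M` is `I`-relative generalized Cohen-Macaulay: `cd(I,M) ≤ 0` or `cd(I,M) = f_I(M)`. -/
def IsRelGCM (I : Ideal R) (M : Type) [AddCommGroup M] [Module R M] : Prop :=
  (∀ i : ℕ, 0 < i → Subsingleton (locH I i M)) ∨
    ∃ c : ℕ, IsCd I M c ∧ IsFinDim I M c

/-- `ara(I, M) = n`: the arithmetic rank of `I` with respect to `M` equals `n`, i.e. `n` is the
least integer such that there are `x_1, …, x_n ∈ R` with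
`Rad(⟨x_1,…,x_n⟩ + Ann M) = Rad(I + Ann M)`. -/
def IsAra (I : Ideal R) (M : Type) [AddCommGroup M] [Module R M] (n : ℕ) : Prop :=
  IsLeast {k : ℕ | ∃ x : Fin k → R,
    (Ideal.span (Set.range x) + Module.annihilator R M).radical
      = (I + Module.annihilator R M).radical} n

/-- `x_1, …, x_c` is an `I`-relative system of parameters of `M` (where `c = cd(I,M)`):
the `x_i` lie in `I` and `Rad(⟨x_1,…,x_c⟩ + Ann M) = Rad(I + Ann M)`. -/
def IsRsop (I : Ideal R) (M : Type) [AddCommGroup M] [Module R M] {c : ℕ}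
    (x : Fin c → R) : Prop :=
  (∀ j, x j ∈ I) ∧
    (Ideal.span (Set.range x) + Module.annihilator R M).radical
      = (I + Module.annihilator R M).radical

/-! ### Relative Buchsbaum and relative quasi Buchsbaum modules -/

/-- `M` is `I`-relative Buchsbaum: `cd(I,M) = ara(I,M)` and every `I`-relative system of
parameters of `M` is an `I`-weak sequence on `M`. -/
def IsRelBuchsbaum (I : Ideal R) (M : Type) [AddCommGroup M] [Module R M] : Prop :=
  ∃ c : ℕ, IsCd I M c ∧ IsAra I M c ∧
    ∀ x : Fin c → R, IsRsop I M x → IsWeakSeq I M x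

/-- `M` is `I`-relative quasi Buchsbaum: `cd(I,M) = ara(I,M)` and every `I`-relative system of
parameters of `M` contained in `I²` is an `I`-weak sequence on `M`. -/
def IsRelQuasiBuchsbaum (I : Ideal R) (M : Type) [AddCommGroup M] [Module R M] : Prop :=
  ∃ c : ℕ, IsCd I M c ∧ IsAra I M c ∧
    ∀ x : Fin c → R, IsRsop I M x → (∀ j, x j ∈ I ^ 2) → IsWeakSeq I M x

/-! ### The natural maps `φ^i_M : Ext^i(R/I, M) → H^i_I(M)` and relative surjective
Buchsbaum modules -/

/-- The `i`-th Ext module `Ext^i_R(R/I, M)`. -/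
abbrev extH (I : Ideal R) (i : ℕ) (M : Type) [AddCommGroup M] [Module R M] : ModuleCat R :=
  ((Ext R (ModuleCat R) i).obj (Opposite.op (ModuleCat.of R (R ⧸ I)))).obj (ModuleCat.of R M)

/-- The natural map `φ^i_M : Ext^i_R(R/I, M) → H^i_I(M)`, i.e. the structure map into the
colimit `H^i_I(M) = colim_n Ext^i_R(R/I^n, M)` at `n = 1`. -/
def phi (I : Ideal R) (i : ℕ) (M : Type) [AddCommGroup M] [Module R M] :
    ((localCohomology.diagram (localCohomology.idealPowersDiagram I) i).obj
        (Opposite.op (Opposite.op (1 : ℕ)))).obj (ModuleCat.of R M) ⟶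
      (localCohomology I i).obj (ModuleCat.of R M) :=
  have := localCohomology.hasColimitDiagram.{0, 0} (localCohomology.idealPowersDiagram I) i
  (Limits.colimit.ι (localCohomology.diagram (localCohomology.idealPowersDiagram I) i)
      (Opposite.op (Opposite.op (1 : ℕ)))).app (ModuleCat.of R M)

/-- `φ^i_M` is surjective. -/
def PhiSurj (I : Ideal R) (i : ℕ) (M : Type) [AddCommGroup M] [Module R M] : Prop :=
  Function.Surjective (phi I i M)

/-- `M` is `I`-relative surjective Buchsbaum: `φ^i_M` is surjective for all `i < cd(I,M)`. -/
def IsRelSurjBuchsbaum (I : Ideal R) (M : Type) [AddCommGroup M] [Module R M] : Prop :=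
  ∀ i : ℕ, (∃ j : ℕ, i < j ∧ Nontrivial (locH I j M)) → PhiSurj I i M

/-- `grade(I, M) = r`: `r` is the least integer with `Ext^r_R(R/I, M) ≠ 0`. -/
def IsGrade (I : Ideal R) (M : Type) [AddCommGroup M] [Module R M] (r : ℕ) : Prop :=
  Nontrivial (extH I r M) ∧ ∀ i : ℕ, i < r → Subsingleton (extH I i M)

/-!
Rewriting `Hⁱ_I(M)` as a colimit of Yoneda Ext groups gives long exact sequences compatible with
the maps `φⁱ`.

(i) ⇒ (ii): if `φⁱ` is surjective, then `I` kills `Hⁱ_I(M)`. Let `x₁, …, x_c` be an `I`-relative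
system of parameters and `x₁ m = 0`. Modulo the annihilator of `m`, the ideal `I` is generated up to
radical by only `c - 1` elements, and since powers of `I` kill `Hⁱ_I(M)` for `i < c`, this forces
`m` to be `I`-power torsion: after dividing out the torsion one finds a regular element `y ∈ I` such
that, by induction, the image of `m` in `M / yᵏM` is `I`-power torsion for every `k`; a fixed power
of `y` then moves `m` into `⋂ yᵏM = 0`, so `m = 0`. Surjectivity of `φ⁰`
gives `I m = 0`. Finally, surjectivity of `φⁱ` and `φⁱ⁺¹` for `M` implies that of `φⁱ` for
`M / x₁M`, so one can pass to `x₂, …, x_c`.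

(iii) ⇒ (i): a class `z ∈ Hʳ_I(M)` is killed by sufficiently high powers of any `I`-relative system
of parameters, and these powers form an `I`-weak sequence. Its first element is regular if `r > 0`,
so `z` lifts along the connecting homomorphism `Hʳ⁻¹_I(M / x₁M) → Hʳ_I(M)`; iterating reduces to
`r = 0`, where being killed by `x₁` implies being killed by `I`.
-/

section ExtComparison

open Limits

universe w v u t

variable {C : Type u} [Category.{v} C] [Abelian C]

theorem extMk_eq_zero_iff_exists_next [HasExt.{w} C] {X Y : C} (P : ProjectiveResolution X) {n : ℕ}
    (g : P.complex.X n ⟶ Y) (hg : P.complex.d (n + 1) n ≫ g = 0) :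
    P.extMk g (n + 1) rfl hg = 0 ↔
      ∃ h : P.complex.X ((ComplexShape.down ℕ).next n) ⟶ Y, P.complex.d n _ ≫ h = g := by
  rcases n with - | n
  · have hd : P.complex.d 0 ((ComplexShape.down ℕ).next 0) = 0 := P.complex.shape _ _ (by simp)
    simp only [hd, zero_comp, exists_const]
    constructor
    · intro h
      rw [← P.extEquivCohomologyClass.apply_eq_iff_eq, P.extEquivCohomologyClass_extMk,
        P.extEquivCohomologyClass_zero, CochainComplex.HomComplex.CohomologyClass.mk_eq_zero_iff,
        CochainComplex.HomComplex.Cocycle.toSingleMk_mem_coboundaries_iff _ _ _ _ _ 1 (by simp)]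
        at h
      obtain ⟨u, hu⟩ := h
      have hzero : IsZero (P.cochainComplex.X 1) :=
        P.cochainComplex.isZero_of_isStrictlyLE 0 1
      rw [← cancel_epi (P.cochainComplexXIso (-(0 : ℕ)) 0 rfl).hom, ← hu, hzero.eq_of_src u 0,
        comp_zero, comp_zero]
    · rintro rfl
      simp
  · rw [ChainComplex.next_nat_succ]
    exact P.extMk_eq_zero_iff _ _ _ _ _ rfl

/-- The morphism of complexes opposite to `φ`. -/
abbrev unopMap {V ι : Type*} [Category V] [Preadditive V] {c : ComplexShape ι}
    {K L : HomologicalComplex Vᵒᵖ c} (φ : K ⟶ L) : L.unop ⟶ K.unop :=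
  (HomologicalComplex.unopFunctor V c).map φ.op

theorem homologyUnop_inv_naturality {V ι : Type*} [Category V] [Abelian V] {c : ComplexShape ι}
    {K L : HomologicalComplex Vᵒᵖ c} (φ : K ⟶ L) (i : ι) :
    (HomologicalComplex.homologyMap φ i).unop ≫ (K.homologyUnop i).inv =
      (L.homologyUnop i).inv ≫ HomologicalComplex.homologyMap (unopMap φ) i := by
  rw [Iso.comp_inv_eq, Category.assoc, Iso.eq_inv_comp]
  exact congrArg Quiver.Hom.unop (HomologicalComplex.homologyOp_hom_naturality (unopMap φ) i)

variable (A : Type t) [CommRing A] [Linear A C]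

open HomologicalComplex in
theorem homologyπ_eq_zero_iff {ι : Type*} {c : ComplexShape ι}
    (K : HomologicalComplex (ModuleCat.{v} A) c) (n : ι) (z : K.cycles n) :
    K.homologyπ n z = 0 ↔ ∃ y, K.d (c.prev n) n y = K.iCycles n z := by
  have hexact : (ShortComplex.mk (K.toCycles (c.prev n) n) (K.homologyπ n) (by simp)).Exact :=
    ShortComplex.exact_of_g_is_cokernel _ (K.homologyIsCokernel _ n rfl)
  have hi : Function.Injective (K.iCycles n) := (ModuleCat.mono_iff_injective _).1 inferInstance
  rw [ShortComplex.moduleCat_exact_iff] at hexact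
  constructor
  · intro h
    obtain ⟨y, rfl⟩ := hexact z h
    exact ⟨y, by simp [← ConcreteCategory.comp_apply]⟩
  · rintro ⟨y, hy⟩
    have : K.toCycles (c.prev n) n y = z := hi (by rw [← hy]; simp [← ConcreteCategory.comp_apply])
    simp [← this, ← ConcreteCategory.comp_apply]

variable {X Y : C} (P : ProjectiveResolution X)

/-- The morphism `P_n ⟶ Y` underlying an `n`-cocycle of the complex `Hom(P, Y)`. -/
def cocycleHom {n : ℕ} (z : (P.complex.linearYonedaObj A Y).cycles n) : P.complex.X n ⟶ Y :=
  (P.complex.linearYonedaObj A Y).iCycles n z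

theorem d_comp_cocycleHom {n : ℕ} (z : (P.complex.linearYonedaObj A Y).cycles n) :
    P.complex.d (n + 1) n ≫ cocycleHom A P z = 0 :=
  congrArg (fun f => f z) ((P.complex.linearYonedaObj A Y).iCycles_d n (n + 1))

variable {P} {X' : C} {P' : ProjectiveResolution X'} {f : X' ⟶ X}

/-- The map of complexes `Hom(P, Y) ⟶ Hom(P', Y)` induced by a lift `P' ⟶ P` of `f` to projective
resolutions. -/
def precompLift (Y : C) (φ : ProjectiveResolution.Hom P' P f) :
    P.complex.linearYonedaObj A Y ⟶ P'.complex.linearYonedaObj A Y :=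
  unopMap ((((linearYoneda A C).obj Y).rightOp.mapHomologicalComplex _).map φ.hom)

theorem isoExt_hom_naturality [EnoughProjectives C] (φ : ProjectiveResolution.Hom P' P f) (n : ℕ) :
    ((Ext A C n).map f.op).app Y ≫ (P'.isoExt n Y).hom =
      (P.isoExt n Y).hom ≫ HomologicalComplex.homologyMap (precompLift A Y φ) n := by
  let F := ((linearYoneda A C).obj Y).rightOp
  have hderived : ((Ext A C n).map f.op).app Y ≫ (P'.isoLeftDerivedObj F n).inv.unop =
      (P.isoLeftDerivedObj F n).inv.unop ≫
        (HomologicalComplex.homologyMap ((F.mapHomologicalComplex _).map φ.hom) n).unop := by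
    have h := ProjectiveResolution.isoLeftDerivedObj_hom_naturality f P' P φ.hom
      (by simpa using φ.hom_f_zero_comp_π_f_zero) F n
    rw [← Iso.inv_comp_eq, ← Category.assoc, ← Iso.eq_comp_inv] at h
    exact congrArg Quiver.Hom.unop h
  have hunop := homologyUnop_inv_naturality ((F.mapHomologicalComplex _).map φ.hom) n
  change _ ≫ (P'.isoLeftDerivedObj F n).inv.unop ≫ (HomologicalComplex.homologyUnop _ n).inv =
    ((P.isoLeftDerivedObj F n).inv.unop ≫ (HomologicalComplex.homologyUnop _ n).inv) ≫ _
  exact (Category.assoc _ _ _).symm.trans <| (congrArg (· ≫ _) hderived).trans <|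
    (Category.assoc _ _ _).trans <| (congrArg (_ ≫ ·) hunop).trans (Category.assoc _ _ _).symm

variable (P) [HasExt.{w} C]

/-- The class in `Ext X Y n` of an `n`-cocycle of the complex `Hom(P, Y)`, where `P` is a
projective resolution of `X`. -/
def cyclesToExt (Y : C) (n : ℕ) :
    (P.complex.linearYonedaObj A Y).cycles n →+ Abelian.Ext.{w} X Y n :=
  AddMonoidHom.mk' (fun z => P.extMk (cocycleHom A P z) (n + 1) rfl (d_comp_cocycleHom A P z))
    fun z z' => by
      rw [P.add_extMk]
      congr 1
      exact map_add ((P.complex.linearYonedaObj A Y).iCycles n).hom z z'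

theorem cyclesToExt_apply {n : ℕ} (z : (P.complex.linearYonedaObj A Y).cycles n) :
    cyclesToExt A P Y n z = P.extMk (cocycleHom A P z) (n + 1) rfl (d_comp_cocycleHom A P z) :=
  rfl

theorem cyclesToExt_surjective (n : ℕ) : Function.Surjective (cyclesToExt A P Y n) := by
  intro e
  obtain ⟨g, hg, rfl⟩ := P.extMk_surjective e (n + 1) rfl
  refine ⟨(P.complex.linearYonedaObj A Y).cyclesMk g (n + 1) (by simp) hg, ?_⟩
  rw [cyclesToExt_apply]
  congr 1
  exact HomologicalComplex.i_cyclesMk (P.complex.linearYonedaObj A Y) g (n + 1) (by simp) hg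

theorem cyclesToExt_eq_zero_iff {n : ℕ} (z : (P.complex.linearYonedaObj A Y).cycles n) :
    cyclesToExt A P Y n z = 0 ↔ (P.complex.linearYonedaObj A Y).homologyπ n z = 0 := by
  rw [homologyπ_eq_zero_iff]
  exact extMk_eq_zero_iff_exists_next P (cocycleHom A P z) (d_comp_cocycleHom A P z)

theorem homologyπ_surjective {ι : Type*} {c : ComplexShape ι}
    (K : HomologicalComplex (ModuleCat.{v} A) c) (n : ι) : Function.Surjective (K.homologyπ n) :=
  (ModuleCat.epi_iff_surjective _).1 inferInstance

/-- Yoneda Ext computed as the cohomology of `Hom(P, Y)`, for a projective resolution `P` of `X`. -/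
def homologyExtEquiv (Y : C) (n : ℕ) :
    (P.complex.linearYonedaObj A Y).homology n ≃+ Abelian.Ext.{w} X Y n :=
  (QuotientAddGroup.quotientKerEquivOfSurjective
    ((P.complex.linearYonedaObj A Y).homologyπ n).hom.toAddMonoidHom
      (homologyπ_surjective A _ n)).symm.trans <|
    (QuotientAddGroup.quotientAddEquivOfEq
      (AddSubgroup.ext fun z => (cyclesToExt_eq_zero_iff A P z).symm)).trans <|
    QuotientAddGroup.quotientKerEquivOfSurjective (cyclesToExt A P Y n)
      (cyclesToExt_surjective A P n)

theorem homologyExtEquiv_homologyπ {n : ℕ} (z : (P.complex.linearYonedaObj A Y).cycles n) :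
    homologyExtEquiv A P Y n ((P.complex.linearYonedaObj A Y).homologyπ n z) =
      cyclesToExt A P Y n z := by
  have : (QuotientAddGroup.quotientKerEquivOfSurjective
    ((P.complex.linearYonedaObj A Y).homologyπ n).hom.toAddMonoidHom
      (homologyπ_surjective A _ n)).symm ((P.complex.linearYonedaObj A Y).homologyπ n z) =
      QuotientAddGroup.mk z := by
    rw [AddEquiv.symm_apply_eq]; rfl
  simp only [homologyExtEquiv, AddEquiv.trans_apply, this]
  rfl

variable (C) in
/-- The derived functors of `Hom(-, Y)` agree with Yoneda Ext. -/
def extEquiv [EnoughProjectives C] (X Y : C) (n : ℕ) :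
    ((Ext A C n).obj (Opposite.op X)).obj Y ≃+ Abelian.Ext.{w} X Y n :=
  ((projectiveResolution X).isoExt n Y).toLinearEquiv.toAddEquiv.trans
    (homologyExtEquiv A (projectiveResolution X) Y n)

variable {P} in
theorem homologyExtEquiv_naturality (φ : ProjectiveResolution.Hom P' P f) (n : ℕ)
    (z : (P.complex.linearYonedaObj A Y).homology n) :
    homologyExtEquiv A P' Y n (HomologicalComplex.homologyMap (precompLift A Y φ) n z) =
      (Abelian.Ext.mk₀ f).comp (homologyExtEquiv A P Y n z) (zero_add n) := by
  obtain ⟨z, rfl⟩ := homologyπ_surjective A _ n z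
  rw [← ConcreteCategory.comp_apply, HomologicalComplex.homologyπ_naturality,
    ConcreteCategory.comp_apply, homologyExtEquiv_homologyπ, homologyExtEquiv_homologyπ]
  rw [cyclesToExt_apply, cyclesToExt_apply, ProjectiveResolution.mk₀_comp_extMk _ _ _ _ φ]
  congr 1
  exact congrArg (fun g => g z) (HomologicalComplex.cyclesMap_i (precompLift A Y φ) n)

theorem extEquiv_naturality [EnoughProjectives C] {X X' Y : C} (f : X' ⟶ X) (n : ℕ)
    (e : ((Ext A C n).obj (Opposite.op X)).obj Y) :
    extEquiv C A X' Y n (((Ext A C n).map f.op).app Y e) =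
      (Abelian.Ext.mk₀ f).comp (extEquiv C A X Y n e) (zero_add n) := by
  let φ : ProjectiveResolution.Hom (projectiveResolution X') (projectiveResolution X) f :=
    { hom := ProjectiveResolution.lift f _ _
      hom_f_zero_comp_π_f_zero :=
        HomologicalComplex.congr_hom (ProjectiveResolution.lift_commutes f _ _) 0 }
  refine Eq.trans ?_ (homologyExtEquiv_naturality A φ n _)
  exact congrArg (homologyExtEquiv A (projectiveResolution X') Y n)
    (congrArg (fun g => g e) (isoExt_hom_naturality A φ n))

end ExtComparison

section ExtColimit

universe u

variable {R : Type u} [CommRing R] (I : Ideal R)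

open Abelian

/-- The cyclic module `R ⧸ I ^ n`, as a term of the direct system defining local cohomology. -/
abbrev quotPow (n : ℕ) : ModuleCat.{u} R := ModuleCat.of R (R ⧸ I ^ n)

/-- The projection `R ⧸ I ^ m ⟶ R ⧸ I ^ n` for `n ≤ m`. -/
def quotPowMap {n m : ℕ} (h : n ≤ m) : quotPow I m ⟶ quotPow I n :=
  ModuleCat.ofHom (Submodule.mapQ _ _ LinearMap.id (Ideal.pow_le_pow_right h))

variable {I} in
theorem quotPow_hom_ext {n : ℕ} {M : ModuleCat.{u} R} {f g : quotPow I n ⟶ M}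
    (h : f (Submodule.Quotient.mk 1) = g (Submodule.Quotient.mk 1)) : f = g :=
  ModuleCat.hom_ext (Submodule.linearMap_qext _ (LinearMap.ext_ring h))

theorem quotPowMap_refl (n : ℕ) : quotPowMap I (le_refl n) = 𝟙 _ :=
  quotPow_hom_ext rfl

theorem quotPowMap_comp {n m k : ℕ} (h : n ≤ m) (h' : m ≤ k) :
    quotPowMap I h' ≫ quotPowMap I h = quotPowMap I (h.trans h') :=
  quotPow_hom_ext rfl

/-- The transition map `Extⁱ(R ⧸ Iⁿ, M) → Extⁱ(R ⧸ Iᵐ, M)` for `n ≤ m`. -/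
def extTransition (i : ℕ) (M : ModuleCat.{u} R) (n m : ℕ) (h : n ≤ m) :
    Ext (quotPow I n) M i →ₗ[R] Ext (quotPow I m) M i :=
  (Ext.mk₀ (quotPowMap I h)).precompOfLinear R M (zero_add i)

variable {I} in
theorem extTransition_apply {i : ℕ} {M : ModuleCat.{u} R} {n m : ℕ} (h : n ≤ m)
    (e : Ext (quotPow I n) M i) :
    extTransition I i M n m h e = (Ext.mk₀ (quotPowMap I h)).comp e (zero_add i) :=
  rfl

instance extTransition_directedSystem (i : ℕ) (M : ModuleCat.{u} R) :
    DirectedSystem (fun n => Ext (quotPow I n) M i) (fun n m h => extTransition I i M n m h) where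
  map_self n e := by rw [extTransition_apply, quotPowMap_refl, Ext.mk₀_id_comp]
  map_map n m k h h' e := by
    simp only [extTransition_apply, ← quotPowMap_comp I h h', Ext.mk₀_comp_mk₀_assoc]

/-- Local cohomology in the form `colim_n Extⁱ(R ⧸ Iⁿ, M)`, with Yoneda Ext groups: the long exact
sequences of Yoneda Ext then pass to the colimit directly. -/
abbrev ExtColimit (i : ℕ) (M : ModuleCat.{u} R) : Type u :=
  Module.DirectLimit (fun n => Ext (quotPow I n) M i) (extTransition I i M)

namespace ExtColimit

/-- The structure map `Extⁱ(R ⧸ Iⁿ, M) → ExtColimit I i M`; for `n = 1` it is the natural map `φⁱ`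
of the definition of relative surjective Buchsbaum modules. -/
def of (i n : ℕ) (M : ModuleCat.{u} R) : Ext (quotPow I n) M i →ₗ[R] ExtColimit I i M :=
  Module.DirectLimit.of R ℕ _ (extTransition I i M) n

variable {I} {i j k n m : ℕ} {M N K : ModuleCat.{u} R}

theorem of_extTransition (h : n ≤ m) (e : Ext (quotPow I n) M i) :
    of I i m M (extTransition I i M n m h e) = of I i n M e :=
  Module.DirectLimit.of_f

theorem exists_of (z : ExtColimit I i M) : ∃ n e, of I i n M e = z :=
  Module.DirectLimit.exists_of z

theorem exists_extTransition_eq_zero {e : Ext (quotPow I n) M i} (h : of I i n M e = 0) :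
    ∃ m, ∃ h : n ≤ m, extTransition I i M n m h e = 0 :=
  Module.DirectLimit.of.zero_exact h

theorem smul_ext_eq_zero {x : R} (hx : x ∈ I ^ n) (e : Ext (quotPow I n) M i) : x • e = 0 := by
  have hid : x • 𝟙 (quotPow I n) = 0 := quotPow_hom_ext <| by
    change x • (Submodule.Quotient.mk 1 : R ⧸ I ^ n) = 0
    rw [← Submodule.Quotient.mk_smul, Submodule.Quotient.mk_eq_zero]
    simpa using hx
  rw [← Ext.mk₀_id_comp e, ← Ext.smul_comp, ← Ext.mk₀_smul, hid, Ext.mk₀_zero, Ext.zero_comp]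

theorem exists_pow_smul_eq_zero (z : ExtColimit I i M) : ∃ n, ∀ x ∈ I ^ n, x • z = 0 := by
  obtain ⟨n, e, rfl⟩ := exists_of z
  exact ⟨n, fun x hx => by rw [← map_smul, smul_ext_eq_zero hx, map_zero]⟩

theorem smul_eq_zero_of_surjective_of_one (h : Function.Surjective (of I i 1 M)) {x : R}
    (hx : x ∈ I) (z : ExtColimit I i M) : x • z = 0 := by
  obtain ⟨e, rfl⟩ := h z
  rw [← map_smul, smul_ext_eq_zero (by simpa using hx), map_zero]

variable (I) in
/-- Yoneda composition with a class `β ∈ Extʲ(M, N)` on local cohomology. -/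
def comp (β : Ext M N j) (h : i + j = k) : ExtColimit I i M →ₗ[R] ExtColimit I k N :=
  Module.DirectLimit.map (fun n => β.postcompOfLinear R (quotPow I n) h) fun n m hnm =>
    LinearMap.ext fun e => Ext.comp_assoc (Ext.mk₀ (quotPowMap I hnm)) e β (zero_add i) h (by omega)

theorem comp_of (β : Ext M N j) (h : i + j = k) (e : Ext (quotPow I n) M i) :
    comp I β h (of I i n M e) = of I k n N (e.comp β h) :=
  Module.DirectLimit.map_apply_of _ _ _

theorem comp_exact {i₁ i₂ i₃ : ℕ} {β : Ext M N j} {γ : Ext N K k} {h : i₁ + j = i₂}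
    {h' : i₂ + k = i₃}
    (hex : ∀ n, Function.Exact (β.postcomp (quotPow I n) h) (γ.postcomp (quotPow I n) h')) :
    Function.Exact (comp I β h) (comp I γ h') := by
  intro z
  constructor
  · obtain ⟨n, e, rfl⟩ := exists_of z
    intro hz
    rw [comp_of] at hz
    obtain ⟨m, hm, hz⟩ := exists_extTransition_eq_zero hz
    rw [extTransition_apply,
      ← Ext.comp_assoc (Ext.mk₀ (quotPowMap I hm)) e γ (zero_add i₂) h' (by omega)] at hz
    obtain ⟨w, hw⟩ := (hex m _).1 hz
    exact ⟨of I i₁ m M w, by rw [comp_of, ← of_extTransition hm]; exact congrArg _ hw⟩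
  · rintro ⟨w, rfl⟩
    obtain ⟨n, e, rfl⟩ := exists_of w
    rw [comp_of, comp_of]
    exact (congrArg _ ((hex n).apply_apply_eq_zero e)).trans (map_zero _)

variable (I i) in
/-- The map on local cohomology induced by a morphism of modules. -/
def map (f : M ⟶ N) : ExtColimit I i M →ₗ[R] ExtColimit I i N :=
  comp I (Ext.mk₀ f) (add_zero i)

theorem map_of (f : M ⟶ N) (e : Ext (quotPow I n) M i) :
    map I i f (of I i n M e) = of I i n N (e.comp (Ext.mk₀ f) (add_zero i)) :=
  comp_of _ _ _

theorem map_smul_id (x : R) (z : ExtColimit I i M) : map I i (x • 𝟙 M) z = x • z := by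
  obtain ⟨n, e, rfl⟩ := exists_of z
  rw [map_of, ← map_smul, Ext.smul_eq_comp_mk₀]

variable {S : ShortComplex (ModuleCat.{u} R)} (hS : S.ShortExact)

variable (I i) in
/-- The connecting homomorphism in local cohomology. -/
def δ : ExtColimit I i S.X₃ →ₗ[R] ExtColimit I (i + 1) S.X₁ :=
  comp I hS.extClass rfl

theorem δ_of (e : Ext (quotPow I n) S.X₃ i) :
    δ I i hS (of I i n S.X₃ e) = of I (i + 1) n S.X₁ (e.comp hS.extClass rfl) :=
  comp_of _ _ _

theorem exact_map_δ : Function.Exact (map I i S.g) (δ I i hS) :=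
  comp_exact fun n => (ShortComplex.ab_exact_iff_function_exact _).1
    (Ext.covariant_sequence_exact₃' (quotPow I n) hS i (i + 1) rfl)

theorem δ_injective (h : Subsingleton (ExtColimit I i S.X₂)) : Function.Injective (δ I i hS) := by
  refine (injective_iff_map_eq_zero _).2 fun z hz => ?_
  obtain ⟨w, rfl⟩ := (exact_map_δ hS z).1 hz
  rw [Subsingleton.elim w 0, map_zero]

theorem exact_δ_map : Function.Exact (δ I i hS) (map I (i + 1) S.f) :=
  comp_exact fun n => (ShortComplex.ab_exact_iff_function_exact _).1
    (Ext.covariant_sequence_exact₁' (quotPow I n) hS i (i + 1) rfl)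

/-- Evaluation at the class of `1`, as a map `Ext⁰(R ⧸ Iⁿ, M) → M`. -/
def extEvalOne (n : ℕ) (M : ModuleCat.{u} R) : Ext (quotPow I n) M 0 →ₗ[R] M :=
  LinearMap.applyₗ (Submodule.Quotient.mk 1) ∘ₗ
    (Ext.linearEquiv₀.trans ModuleCat.homLinearEquiv).toLinearMap

theorem extEvalOne_mk₀ (f : quotPow I n ⟶ M) :
    extEvalOne n M (Ext.mk₀ f) = f (Submodule.Quotient.mk 1) := by
  have h : Ext.linearEquiv₀ (R := R) (Ext.mk₀ f) = f := Ext.linearEquiv₀.apply_symm_apply f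
  exact congrArg (fun g : quotPow I n ⟶ M => g (Submodule.Quotient.mk 1)) h

theorem extEvalOne_extTransition (h : n ≤ m) (e : Ext (quotPow I n) M 0) :
    extEvalOne m M (extTransition I 0 M n m h e) = extEvalOne n M e := by
  obtain ⟨f, rfl⟩ := (Ext.mk₀_bijective _ _).2 e
  rw [extTransition_apply, Ext.mk₀_comp_mk₀, extEvalOne_mk₀, extEvalOne_mk₀]
  rfl

theorem extEvalOne_injective (n : ℕ) (M : ModuleCat.{u} R) :
    Function.Injective (extEvalOne (I := I) n M) := fun e e' h => by
  obtain ⟨f, rfl⟩ := (Ext.mk₀_bijective _ _).2 e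
  obtain ⟨g, rfl⟩ := (Ext.mk₀_bijective _ _).2 e'
  rw [extEvalOne_mk₀, extEvalOne_mk₀] at h
  rw [quotPow_hom_ext h]

theorem range_extEvalOne (n : ℕ) (M : ModuleCat.{u} R) :
    LinearMap.range (extEvalOne (I := I) n M) = Submodule.torsionBySet R M (I ^ n : Ideal R) := by
  ext m
  rw [Submodule.mem_torsionBySet_iff]
  constructor
  · rintro ⟨e, rfl⟩ a
    rw [← map_smul, smul_ext_eq_zero a.2, map_zero]
  · intro h
    let f := (I ^ n).liftQ (LinearMap.toSpanSingleton R M m) fun a ha => h ⟨a, ha⟩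
    exact ⟨Ext.mk₀ (ModuleCat.ofHom f), (extEvalOne_mk₀ _).trans (one_smul R m)⟩

variable (I M) in
/-- The canonical map from `H⁰_I(M)` to `M`, identifying `H⁰_I(M)` with the `I`-power torsion. -/
def zeroEval : ExtColimit I 0 M →ₗ[R] M :=
  Module.DirectLimit.lift R ℕ _ _ (fun n => extEvalOne n M) fun _ _ => extEvalOne_extTransition

theorem zeroEval_of (e : Ext (quotPow I n) M 0) : zeroEval I M (of I 0 n M e) = extEvalOne n M e :=
  Module.DirectLimit.lift_of _ _ _

variable (I M) in
theorem zeroEval_injective : Function.Injective (zeroEval I M) :=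
  Module.DirectLimit.lift_injective _ _ fun n => extEvalOne_injective n M

theorem exists_zeroEval_of_eq_iff {x : M} :
    (∃ e, zeroEval I M (of I 0 n M e) = x) ↔ ∀ a ∈ I ^ n, a • x = 0 := by
  have h := SetLike.ext_iff.1 (range_extEvalOne (I := I) n M) x
  simpa only [zeroEval_of, LinearMap.mem_range, Submodule.mem_torsionBySet_iff, Subtype.forall,
    SetLike.mem_coe] using h

theorem surjective_of_one_iff :
    Function.Surjective (of I 0 1 M) ↔
      ∀ (n : ℕ) (x : M), (∀ a ∈ I ^ n, a • x = 0) → ∀ a ∈ I, a • x = 0 := by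
  constructor
  · intro h n x hx
    obtain ⟨e, rfl⟩ := exists_zeroEval_of_eq_iff.2 hx
    obtain ⟨e', he'⟩ := h (of I 0 n M e)
    simpa only [pow_one] using exists_zeroEval_of_eq_iff.1 ⟨e', congrArg _ he'⟩
  · intro h z
    obtain ⟨n, e, rfl⟩ := exists_of z
    have hx := h n _ (exists_zeroEval_of_eq_iff.1 ⟨e, rfl⟩)
    obtain ⟨e', he'⟩ := exists_zeroEval_of_eq_iff.2 (show ∀ a ∈ I ^ 1, _ by rwa [pow_one])
    exact ⟨e', zeroEval_injective I M he'⟩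

theorem subsingleton_zero_iff :
    Subsingleton (ExtColimit I 0 M) ↔ ∀ (n : ℕ) (x : M), (∀ a ∈ I ^ n, a • x = 0) → x = 0 := by
  constructor
  · intro h n x hx
    obtain ⟨e, rfl⟩ := exists_zeroEval_of_eq_iff.2 hx
    rw [Subsingleton.elim (of I 0 n M e) 0, map_zero]
  · refine fun h => subsingleton_of_forall_eq 0 fun z => zeroEval_injective I M ?_
    obtain ⟨n, e, rfl⟩ := exists_of z
    rw [h n _ (exists_zeroEval_of_eq_iff.1 ⟨e, rfl⟩), map_zero]

end ExtColimit

end ExtColimit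

section LocalCohomology

open Limits Abelian

variable (I : Ideal R) (i : ℕ) (M : Type) [AddCommGroup M] [Module R M]

/-- The direct system with colimit `locH I i M`, as a system of abelian groups. -/
abbrev locHSystem : ℕᵒᵖᵒᵖ ⥤ AddCommGrpCat :=
  localCohomology.diagram (localCohomology.idealPowersDiagram I) i ⋙
    (evaluation _ _).obj (ModuleCat.of R M) ⋙ forget₂ (ModuleCat R) AddCommGrpCat

/-- `locH I i M` as a cocone over its direct system. -/
def locHCocone : Cocone (locHSystem I i M) :=
  have := localCohomology.hasColimitDiagram.{0, 0} (localCohomology.idealPowersDiagram I) i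
  ((evaluation _ _).obj (ModuleCat.of R M) ⋙ forget₂ (ModuleCat R) AddCommGrpCat).mapCocone
    (colimit.cocone (localCohomology.diagram (localCohomology.idealPowersDiagram I) i))

/-- The universal property of `locH I i M`. -/
def isColimitLocHCocone : IsColimit (locHCocone I i M) :=
  have := localCohomology.hasColimitDiagram.{0, 0} (localCohomology.idealPowersDiagram I) i
  isColimitOfPreserves
    ((evaluation _ _).obj (ModuleCat.of R M) ⋙ forget₂ (ModuleCat R) AddCommGrpCat)
    (colimit.isColimit (localCohomology.diagram (localCohomology.idealPowersDiagram I) i))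

/-- `ExtColimit I i M` as a cocone over the direct system of `locH I i M`. -/
def extColimitCocone : Cocone (locHSystem I i M) where
  pt := AddCommGrpCat.of (ExtColimit I i (ModuleCat.of R M))
  ι :=
    { app k := AddCommGrpCat.ofHom <|
        (ExtColimit.of I i k.unop.unop (ModuleCat.of R M)).toAddMonoidHom.comp
          (extEquiv (ModuleCat R) R (quotPow I k.unop.unop) (ModuleCat.of R M) i).toAddMonoidHom
      naturality k l f := by
        ext e
        exact (congrArg _ (extEquiv_naturality R (quotPowMap I (leOfHom f.unop.unop)) i e)).trans
          (ExtColimit.of_extTransition (leOfHom f.unop.unop) _) }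

/-- The comparison map from local cohomology to the colimit of Yoneda Ext groups. -/
def locHToExtColimit : locH I i M →+ ExtColimit I i (ModuleCat.of R M) :=
  ((isColimitLocHCocone I i M).desc (extColimitCocone I i M)).hom

theorem locHToExtColimit_ι (n : ℕ) (e : (locHSystem I i M).obj (.op (.op n))) :
    locHToExtColimit I i M ((locHCocone I i M).ι.app (.op (.op n)) e) =
      ExtColimit.of I i n _ (extEquiv (ModuleCat R) R (quotPow I n) (ModuleCat.of R M) i e) :=
  congrArg (fun f => f.hom e)
    ((isColimitLocHCocone I i M).fac (extColimitCocone I i M) (.op (.op n)))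

theorem locHToExtColimit_injective : Function.Injective (locHToExtColimit I i M) := by
  rw [injective_iff_map_eq_zero]
  intro z hz
  obtain ⟨n, e, rfl⟩ := Concrete.isColimit_exists_rep _ (isColimitLocHCocone I i M) z
  obtain ⟨⟨n⟩⟩ := n
  rw [locHToExtColimit_ι] at hz
  obtain ⟨m, h, hm⟩ := ExtColimit.exists_extTransition_eq_zero hz
  have hzero := (extEquiv (ModuleCat R) R (quotPow I m) (ModuleCat.of R M) i).map_eq_zero_iff.1
    ((extEquiv_naturality R (quotPowMap I h) i e).trans hm)
  have hw := congrArg (fun f => f.hom e) ((locHCocone I i M).w (homOfLE h).op.op)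
  exact hw.symm.trans <|
    (congrArg ((locHCocone I i M).ι.app (.op (.op m))) hzero).trans (map_zero _)

theorem locHToExtColimit_surjective : Function.Surjective (locHToExtColimit I i M) := by
  intro z
  obtain ⟨n, e, rfl⟩ := ExtColimit.exists_of z
  obtain ⟨e, rfl⟩ := (extEquiv (ModuleCat R) R (quotPow I n) (ModuleCat.of R M) i).surjective e
  exact ⟨_, locHToExtColimit_ι I i M n e⟩

/-- Local cohomology, defined by derived functors of `Hom` in the first variable, is the colimit of
Yoneda Ext groups. -/
def locHEquivExtColimit : locH I i M ≃+ ExtColimit I i (ModuleCat.of R M) :=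
  AddEquiv.ofBijective (locHToExtColimit I i M)
    ⟨locHToExtColimit_injective I i M, locHToExtColimit_surjective I i M⟩

theorem locHEquivExtColimit_phi (e) :
    locHEquivExtColimit I i M (phi I i M e) =
      ExtColimit.of I i 1 _ (extEquiv (ModuleCat R) R (quotPow I 1) (ModuleCat.of R M) i e) :=
  locHToExtColimit_ι I i M 1 e

theorem subsingleton_locH_iff :
    Subsingleton (locH I i M) ↔ Subsingleton (ExtColimit I i (ModuleCat.of R M)) :=
  (locHEquivExtColimit I i M).subsingleton_congr

theorem phiSurj_iff :
    PhiSurj I i M ↔ Function.Surjective (ExtColimit.of I i 1 (ModuleCat.of R M)) := by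
  have h : locHEquivExtColimit I i M ∘ phi I i M =
      ExtColimit.of I i 1 _ ∘ extEquiv (ModuleCat R) R (quotPow I 1) (ModuleCat.of R M) i :=
    funext (locHEquivExtColimit_phi I i M)
  exact (EquivLike.comp_surjective (phi I i M) (locHEquivExtColimit I i M)).symm.trans <|
    h ▸ EquivLike.surjective_comp _ _

end LocalCohomology

section TorsionVanishing

open Abelian

universe u

variable {R : Type u} [CommRing R]

theorem exists_extClass_comp_eq {S : ShortComplex (ModuleCat.{u} R)} (hS : S.ShortExact)
    [Projective S.X₂] {N : ModuleCat.{u} R} {i : ℕ} (e : Ext S.X₃ N (i + 1)) :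
    ∃ e' : Ext S.X₁ N i, hS.extClass.comp e' (add_comm 1 i) = e :=
  Ext.contravariant_sequence_exact₃ hS N e (Ext.eq_zero_of_projective _) (add_comm 1 i)

variable {X Y X' Y' N : Type u} [AddCommGroup X] [Module R X] [AddCommGroup Y] [Module R Y]
  [AddCommGroup X'] [Module R X'] [AddCommGroup Y'] [Module R Y'] [AddCommGroup N] [Module R N]

theorem mk₀_comp_extClass_comp_eq_zero {g' : X' →ₗ[R] Y'} (hg' : Function.Surjective g')
    {g : X →ₗ[R] Y} (hg : Function.Surjective g) {b : X' →ₗ[R] X} {c : Y' →ₗ[R] Y}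
    (hbc : g ∘ₗ b = c ∘ₗ g') {J : Ideal R}
    (hb : ∀ x ∈ LinearMap.ker g', b x ∈ J • LinearMap.ker g) {j k : ℕ} (h : 1 + j = k)
    {e : Ext (ModuleCat.of R (LinearMap.ker g)) (ModuleCat.of R N) j}
    (he : (Ext.mk₀ (ModuleCat.ofHom (J • (⊤ : Submodule R (LinearMap.ker g))).subtype)).comp e
      (zero_add j) = 0) :
    (Ext.mk₀ (ModuleCat.ofHom c)).comp
      ((LinearMap.shortExact_shortComplexKer hg).extClass.comp e h) (zero_add k) = 0 := by
  let a : LinearMap.ker g' →ₗ[R] (J • (⊤ : Submodule R (LinearMap.ker g)) : Submodule R _) :=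
    ((b.restrict fun x hx => Submodule.smul_le_right (hb x hx)).codRestrict _
      fun x => (Submodule.mem_smul_top_iff _ _ _).2 (hb x x.2))
  let α : LinearMap.shortComplexKer g' ⟶ LinearMap.shortComplexKer g :=
    { τ₁ := ModuleCat.ofHom a ≫ ModuleCat.ofHom (Submodule.subtype _)
      τ₂ := ModuleCat.ofHom b
      τ₃ := ModuleCat.ofHom c
      comm₁₂ := rfl
      comm₂₃ := congrArg ModuleCat.ofHom hbc }
  have hα := ShortComplex.ShortExact.extClass_naturality
    (LinearMap.shortExact_shortComplexKer hg') (LinearMap.shortExact_shortComplexKer hg) α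
  refine (Ext.comp_assoc _ _ _ (zero_add 1) h (by omega)).symm.trans ?_
  rw [← hα, Ext.comp_assoc _ _ _ (add_zero 1) (zero_add j) (by omega), ← Ext.mk₀_comp_mk₀_assoc]
  exact (congrArg (Ext.comp _ · h) ((congrArg (Ext.comp _ · (zero_add j)) he).trans
    (Ext.comp_zero ..))).trans (Ext.comp_zero ..)

theorem exists_mk₀_subtype_comp_eq_zero [IsNoetherianRing R] {I : Ideal R} {k : ℕ}
    (hN : ∀ a ∈ I ^ k, ∀ n : N, a • n = 0) (i : ℕ) (X : Type u) [AddCommGroup X] [Module R X]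
    [Module.Finite R X] (e : Ext (ModuleCat.of R X) (ModuleCat.of R N) i) :
    ∃ m, (Ext.mk₀ (ModuleCat.ofHom (I ^ m • (⊤ : Submodule R X)).subtype)).comp e
      (zero_add i) = 0 := by
  induction i generalizing X with
  | zero =>
    obtain ⟨f, rfl⟩ := (Ext.mk₀_bijective _ _).2 e
    have hker : I ^ k • (⊤ : Submodule R X) ≤ LinearMap.ker f.hom :=
      Submodule.smul_le.2 fun a ha x _ => (map_smul f.hom a x).trans (hN a ha _)
    refine ⟨k, ?_⟩
    rw [Ext.mk₀_comp_mk₀, Ext.mk₀_eq_zero_iff]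
    exact ModuleCat.hom_ext (LinearMap.ext fun x => hker x.2)
  | succ i ih =>
    obtain ⟨n, g, hg⟩ := Module.Finite.exists_fin' R X
    have : Projective (LinearMap.shortComplexKer g).X₂ :=
      inferInstanceAs (Projective (ModuleCat.of R (Fin n → R)))
    obtain ⟨e, rfl⟩ := exists_extClass_comp_eq (LinearMap.shortExact_shortComplexKer hg) e
    obtain ⟨m, hm⟩ := ih (LinearMap.ker g) e
    -- By Artin–Rees, passing from `X` to `I ^ (p + m) • X` shrinks the syzygies to `I ^ m • ker g`.
    obtain ⟨p, hp⟩ := Ideal.exists_pow_inf_eq_pow_smul I (LinearMap.ker g)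
    have hmap : (I ^ (p + m) • ⊤ : Submodule R (Fin n → R)).map g = I ^ (p + m) • ⊤ := by
      rw [Submodule.map_smul'', Submodule.map_top, LinearMap.range_eq_top.2 hg]
    refine ⟨p + m, ?_⟩
    rw [← hmap]
    refine mk₀_comp_extClass_comp_eq_zero (b := Submodule.subtype _)
      (g.submoduleMap_surjective _) hg rfl (fun x hx => ?_) _ hm
    have hx' : (x : Fin n → R) ∈ I ^ (p + m) • ⊤ ⊓ LinearMap.ker g :=
      ⟨x.2, congrArg Subtype.val hx⟩
    rw [hp _ (Nat.le_add_right p m), Nat.add_sub_cancel_left] at hx'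
    exact Submodule.smul_mono le_rfl inf_le_right hx'

theorem subsingleton_extColimit_succ_of_pow_smul_eq_zero [IsNoetherianRing R] {I : Ideal R}
    {k : ℕ} (hN : ∀ a ∈ I ^ k, ∀ n : N, a • n = 0) (i : ℕ) :
    Subsingleton (ExtColimit I (i + 1) (ModuleCat.of R N)) := by
  refine subsingleton_of_forall_eq 0 fun z => ?_
  obtain ⟨n, e, rfl⟩ := ExtColimit.exists_of z
  have : Projective (LinearMap.shortComplexKer (I ^ n).mkQ).X₂ :=
    inferInstanceAs (Projective (ModuleCat.of R R))
  obtain ⟨e, rfl⟩ := exists_extClass_comp_eq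
    (LinearMap.shortExact_shortComplexKer (I ^ n).mkQ_surjective) e
  obtain ⟨m, hm⟩ := exists_mk₀_subtype_comp_eq_zero hN i _ e
  rw [← ExtColimit.of_extTransition (Nat.le_add_left n m)]
  refine (congrArg _ (mk₀_comp_extClass_comp_eq_zero (b := LinearMap.id)
    (I ^ (m + n)).mkQ_surjective (I ^ n).mkQ_surjective rfl (fun x hx => ?_) _ hm)).trans
    (map_zero _)
  rw [Submodule.ker_mkQ] at hx ⊢
  rwa [pow_add] at hx

end TorsionVanishing

section RegularElements

variable {A : Type*} [CommRing A]

open Classical in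
theorem exists_add_notMem_of_isAntichain {s : Finset (Ideal A)}
    (hprime : ∀ P ∈ s, P.IsPrime) (hs : IsAntichain (· ≤ ·) (s : Set (Ideal A))) {w : A}
    {B : Ideal A} (h : ∀ P ∈ s, w ∈ P → ¬ B ≤ P) : ∃ b ∈ B, ∀ P ∈ s, w + b ∉ P := by
  let C := B ⊓ (s.filter (w ∉ ·)).inf id
  have hC : ∀ P ∈ s, w ∈ P → ¬ C ≤ P := by
    intro P hP hw hCP
    rcases (hprime P hP).inf_le.1 hCP with hBP | hQP
    · exact h P hP hw hBP
    · obtain ⟨Q, hQ, hQP⟩ := (hprime P hP).inf_le'.1 hQP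
      obtain ⟨hQs, hwQ⟩ := Finset.mem_filter.1 hQ
      exact hwQ (hs.eq hQs hP hQP ▸ hw)
  have havoid : ¬ (C : Set A) ⊆ ⋃ P ∈ (s.filter (w ∈ ·) : Set (Ideal A)), P := by
    intro hsub
    obtain ⟨P, hP, hCP⟩ := (Ideal.subset_union_prime (f := id) ⊥ ⊥
      fun P hP _ _ => hprime P (Finset.mem_filter.1 hP).1).1 hsub
    exact hC P (Finset.mem_filter.1 hP).1 (Finset.mem_filter.1 hP).2 hCP
  obtain ⟨b, hb, hbP⟩ := Set.not_subset.1 havoid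
  refine ⟨b, hb.1, fun P hP hwb => ?_⟩
  by_cases hw : w ∈ P
  · exact hbP (Set.mem_biUnion (Finset.mem_filter.2 ⟨hP, hw⟩) ((P.add_mem_iff_right hw).1 hwb))
  · have hle : (s.filter (w ∉ ·)).inf id ≤ P :=
      Finset.inf_le (f := id) (Finset.mem_filter.2 ⟨hP, hw⟩)
    exact hw ((P.add_mem_iff_left (hle hb.2)).1 hwb)

theorem exists_add_notMem {s : Set (Ideal A)} (hs : s.Finite) (hprime : ∀ P ∈ s, P.IsPrime) {w : A}
    {B : Ideal A} (h : ∀ P ∈ s, w ∈ P → ¬ B ≤ P) : ∃ b ∈ B, ∀ P ∈ s, w + b ∉ P := by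
  have hmax : {P | Maximal (· ∈ s) P}.Finite := hs.subset fun P hP => hP.1
  obtain ⟨b, hb, hbP⟩ := exists_add_notMem_of_isAntichain (s := hmax.toFinset) (w := w) (B := B)
    (fun P hP => hprime P (hmax.mem_toFinset.1 hP).1)
    (by simpa only [Set.Finite.coe_toFinset] using setOfPred_maximal_antichain (· ∈ s))
    fun P hP => h P (hmax.mem_toFinset.1 hP).1
  refine ⟨b, hb, fun P hP hwb => ?_⟩
  obtain ⟨Q, hPQ, hQ⟩ := hs.exists_le_maximal hP
  exact hbP Q (hmax.mem_toFinset.2 hQ) (hPQ hwb)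

variable {N : Type*} [AddCommGroup N] [Module A N]

theorem not_le_of_mem_associatedPrimes {I : Ideal A}
    (hN : ∀ q : N, I ≤ (Ideal.torsionOf A N q).radical → q = 0) {P : Ideal A}
    (hP : P ∈ associatedPrimes A N) : ¬ I ≤ P := by
  obtain ⟨q, hq⟩ := hP.2
  have hcolon : Submodule.colon (⊥ : Submodule A N) {q} = Ideal.torsionOf A N q := by
    ext a
    rw [Submodule.mem_colon_singleton, Submodule.mem_bot, Ideal.mem_torsionOf_iff]
  rw [hcolon] at hq
  intro hIP
  refine hP.1.ne_top ?_
  rw [hq, hN q (hq ▸ hIP), Ideal.torsionOf_zero, Ideal.radical_top]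

theorem exists_isSMulRegular_add [IsNoetherianRing A] [Module.Finite A N] {I : Ideal A}
    (hN : ∀ q : N, I ≤ (Ideal.torsionOf A N q).radical → q = 0) {w : A} {B : Ideal A}
    (h : I ≤ (Ideal.span {w} ⊔ B).radical) : ∃ b ∈ B, IsSMulRegular N (w + b) := by
  obtain ⟨b, hb, hbP⟩ := exists_add_notMem (associatedPrimes.finite A N) (fun P hP => hP.1)
    (w := w) (B := B) fun P hP hw hB => not_le_of_mem_associatedPrimes hN hP <|
      h.trans (hP.1.radical_le_iff.2 (sup_le ((Ideal.span_singleton_le_iff_mem P).2 hw) hB))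
  refine ⟨b, hb, by_contra fun hreg => ?_⟩
  have hmem : w + b ∈ ⋃ P ∈ associatedPrimes A N, (P : Set A) := by
    rwa [biUnion_associatedPrimes_eq_compl_regular]
  obtain ⟨P, hP, hwb⟩ := Set.mem_iUnion₂.1 hmem
  exact hbP P hP hwb

end RegularElements

section TorsionCriterion

universe u

variable {R : Type u} [CommRing R] {I : Ideal R}

theorem annihilator_mul_annihilator_le_of_exact {X Y Z : Type*} [AddCommGroup X] [Module R X]
    [AddCommGroup Y] [Module R Y] [AddCommGroup Z] [Module R Z] {f : X →ₗ[R] Y} {g : Y →ₗ[R] Z}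
    (h : Function.Exact f g) :
    Module.annihilator R X * Module.annihilator R Z ≤ Module.annihilator R Y := by
  refine Ideal.mul_le.2 fun a ha b hb => Module.mem_annihilator.2 fun y => ?_
  obtain ⟨x, hx⟩ := (h (b • y)).1 (by rw [map_smul, Module.mem_annihilator.1 hb])
  rw [mul_smul, ← hx, ← map_smul, Module.mem_annihilator.1 ha, map_zero]

theorem torsionOf_le_torsionOf_map {M N : Type*} [AddCommGroup M] [Module R M] [AddCommGroup N]
    [Module R N] (f : M →ₗ[R] N) (m : M) : Ideal.torsionOf R M m ≤ Ideal.torsionOf R N (f m) := by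
  intro a ha
  rw [Ideal.mem_torsionOf_iff] at ha ⊢
  rw [← map_smul, ha, map_zero]

theorem annihilator_extColimit_mul_le {N : Type u} [AddCommGroup N] [Module R N] {x : R}
    (hx : IsSMulRegular N x) (i : ℕ) :
    Module.annihilator R (ExtColimit I i (ModuleCat.of R N)) *
        Module.annihilator R (ExtColimit I (i + 1) (ModuleCat.of R N)) ≤
      Module.annihilator R (ExtColimit I i (ModuleCat.of R (QuotSMulTop x N))) :=
  annihilator_mul_annihilator_le_of_exact (ExtColimit.exact_map_δ (I := I) (i := i)
    (IsSMulRegular.smulShortComplex_shortExact (M := ModuleCat.of R N) hx))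

theorem subsingleton_extColimit_quotSMulTop {N : Type u} [AddCommGroup N] [Module R N] {x : R}
    (hx : IsSMulRegular N x) {i : ℕ} (h₀ : Subsingleton (ExtColimit I i (ModuleCat.of R N)))
    (h₁ : Subsingleton (ExtColimit I (i + 1) (ModuleCat.of R N))) :
    Subsingleton (ExtColimit I i (ModuleCat.of R (QuotSMulTop x N))) := by
  have h := annihilator_extColimit_mul_le (I := I) hx i
  rwa [Module.annihilator_eq_top_iff.2 h₀, Module.annihilator_eq_top_iff.2 h₁, Ideal.top_mul,
    top_le_iff, Module.annihilator_eq_top_iff] at h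

theorem span_range_fin_succ {s : ℕ} (z : Fin (s + 1) → R) :
    Ideal.span (Set.range z) = Ideal.span {z 0} ⊔ Ideal.span (Set.range (Fin.tail z)) := by
  rw [Fin.range_fin_succ, Ideal.span_insert]

variable [IsNoetherianRing R] {M N : Type u} [AddCommGroup M] [Module R M] [AddCommGroup N]
  [Module R N]

theorem le_radical_torsionOf_iff {M : Type*} [AddCommGroup M] [Module R M] {m : M} :
    I ≤ (Ideal.torsionOf R M m).radical ↔ ∃ n, ∀ a ∈ I ^ n, a • m = 0 := by
  refine ⟨fun h => ?_, fun ⟨n, hn⟩ a ha => ⟨n, hn _ (Ideal.pow_mem_pow ha n)⟩⟩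
  exact Ideal.exists_pow_le_of_le_radical_of_fg h (IsNoetherian.noetherian I)

theorem subsingleton_extColimit_zero (hN : ∀ q : N, I ≤ (Ideal.torsionOf R N q).radical → q = 0) :
    Subsingleton (ExtColimit I 0 (ModuleCat.of R N)) :=
  ExtColimit.subsingleton_zero_iff.2 fun n q hq => hN q (le_radical_torsionOf_iff.2 ⟨n, hq⟩)

theorem smul_eq_zero_of_mem_annihilator_extColimit_zero {q : N}
    (hq : I ≤ (Ideal.torsionOf R N q).radical) {a : R}
    (ha : a ∈ Module.annihilator R (ExtColimit I 0 (ModuleCat.of R N))) : a • q = 0 := by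
  obtain ⟨n, hn⟩ := le_radical_torsionOf_iff.1 hq
  obtain ⟨e, rfl⟩ := (ExtColimit.exists_zeroEval_of_eq_iff (M := ModuleCat.of R N)).2 hn
  rw [← map_smul, Module.mem_annihilator.1 ha, map_zero]

theorem map_surjective_of_ker_pow_torsion {g : M →ₗ[R] N} (hg : Function.Surjective g) {n : ℕ}
    (hker : ∀ a ∈ I ^ n, ∀ m ∈ LinearMap.ker g, a • m = 0) (i : ℕ) :
    Function.Surjective (ExtColimit.map I i (ModuleCat.ofHom g)) := by
  have := subsingleton_extColimit_succ_of_pow_smul_eq_zero (N := LinearMap.ker g)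
    (fun a ha m => Subtype.ext (hker a ha m m.2)) i
  exact fun z => (ExtColimit.exact_map_δ (LinearMap.shortExact_shortComplexKer hg) z).1
    (Subsingleton.elim (α := ExtColimit I (i + 1) (ModuleCat.of R (LinearMap.ker g))) _ _)

theorem exists_pow_torsion_quotient_torsion_free (I : Ideal R) (M : Type*) [AddCommGroup M]
    [Module R M] [Module.Finite R M] :
    ∃ n, ∀ q : M ⧸ Submodule.torsionBySet R M (I ^ n : Ideal R),
      I ≤ (Ideal.torsionOf R _ q).radical → q = 0 := by
  let T (n : ℕ) := Submodule.torsionBySet R M (I ^ n : Ideal R)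
  have hT : Monotone T := fun n k h =>
    Submodule.torsionBySet_le_torsionBySet_of_subset (Ideal.pow_le_pow_right h)
  obtain ⟨n, hn⟩ :=
    monotone_stabilizes_iff_noetherian.2 (inferInstanceAs (IsNoetherian R M)) ⟨T, hT⟩
  refine ⟨n, fun q hq => ?_⟩
  obtain ⟨m, rfl⟩ := Submodule.mkQ_surjective _ q
  obtain ⟨k, hk⟩ := le_radical_torsionOf_iff.1 hq
  have hmem : m ∈ T (n + k) := by
    refine (Submodule.mem_torsionBySet_iff _ _).2 fun a => ?_
    have hle : I ^ (n + k) ≤ Ideal.torsionOf R M m := by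
      refine (pow_add I n k).trans_le (Ideal.mul_le.2 fun a ha b hb => ?_)
      have hb' := hk b hb
      rw [← map_smul, Submodule.mkQ_apply, Submodule.Quotient.mk_eq_zero,
        Submodule.mem_torsionBySet_iff] at hb'
      exact (mul_smul a b m).trans (hb' ⟨a, ha⟩)
    exact hle a.2
  rw [Submodule.mkQ_apply, Submodule.Quotient.mk_eq_zero]
  exact (hn (n + k) (Nat.le_add_right n k)).symm.le hmem

open Pointwise in
theorem eq_zero_of_forall_mem_pow_smul_top [Module.Finite R N]
    (hI : I ≤ (⊥ : Ideal R).jacobson) {y : R} (hy : y ∈ I) {q : N}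
    (hq : ∀ k, Submodule.Quotient.mk (p := y ^ k • (⊤ : Submodule R N)) q = 0) : q = 0 := by
  have hinf : q ∈ (⨅ k : ℕ, I ^ k • ⊤ : Submodule R N) := by
    refine (Submodule.mem_iInf _).2 fun k => ?_
    obtain ⟨p, -, rfl⟩ := (Submodule.mem_smul_pointwise_iff_exists _ _ _).1
      ((Submodule.Quotient.mk_eq_zero _).1 (hq k))
    exact Submodule.smul_mem_smul (Ideal.pow_mem_pow hy k) trivial
  rwa [Ideal.iInf_pow_smul_eq_bot_of_le_jacobson I hI] at hinf

theorem exists_isSMulRegular_le_radical [Module.Finite R N]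
    (hN : ∀ q : N, I ≤ (Ideal.torsionOf R N q).radical → q = 0) {w : R} (hw : w ∈ I) {J T : Ideal R}
    (hT : T ≤ I) (h : I ≤ (J ⊔ (Ideal.span {w} ⊔ T)).radical) :
    ∃ y ∈ I, IsSMulRegular N y ∧ ∀ k, I ≤ (J ⊔ Ideal.span {y ^ k} ⊔ T).radical := by
  have hK : Ideal.span {w} ⊔ T ≤ I := sup_le ((Ideal.span_singleton_le_iff_mem I).2 hw) hT
  have hB : I ≤ (Ideal.span {w} ⊔ (J ⊓ I ⊔ T)).radical := by
    rw [sup_left_comm, inf_comm, inf_sup_assoc_of_le J hK, Ideal.radical_inf]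
    exact le_inf Ideal.le_radical h
  obtain ⟨b, hb, hreg⟩ := exists_isSMulRegular_add hN hB
  refine ⟨w + b, I.add_mem hw (sup_le inf_le_right hT hb), hreg, fun k => h.trans ?_⟩
  have hJT : J ⊔ T ≤ (J ⊔ Ideal.span {(w + b) ^ k} ⊔ T).radical :=
    (sup_le_sup_right le_sup_left T).trans Ideal.le_radical
  have hwb : w + b ∈ (J ⊔ Ideal.span {(w + b) ^ k} ⊔ T).radical :=
    ⟨k, le_sup_left (a := J ⊔ _) <| le_sup_right (a := J) <| Ideal.mem_span_singleton_self _⟩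
  have hw' : w ∈ (J ⊔ Ideal.span {(w + b) ^ k} ⊔ T).radical :=
    (Ideal.add_mem_iff_left _ (hJT (sup_le_sup_right inf_le_left T hb))).1 hwb
  rw [(Ideal.radical_isRadical _).radical_le_iff]
  exact sup_le (le_sup_left.trans hJT)
    (sup_le ((Ideal.span_singleton_le_iff_mem _).2 hw') (le_sup_right.trans hJT))

theorem eq_zero_of_isSMulRegular [Module.Finite R N] (hjac : I ≤ (⊥ : Ideal R).jacobson) {y : R}
    (hy : y ∈ I) (hreg : IsSMulRegular N y) {q : N}
    (hq : ∀ k, I ≤ (Ideal.torsionOf R (QuotSMulTop (y ^ k) N) (Submodule.Quotient.mk q)).radical)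
    (h₀ : Subsingleton (ExtColimit I 0 (ModuleCat.of R N))) {t : ℕ}
    (h₁ : I ^ t ≤ Module.annihilator R (ExtColimit I 1 (ModuleCat.of R N))) : q = 0 := by
  refine (hreg.pow t).right_eq_zero_of_smul ?_
  refine eq_zero_of_forall_mem_pow_smul_top hjac hy fun k => ?_
  refine smul_eq_zero_of_mem_annihilator_extColimit_zero (hq k) ?_
  refine annihilator_extColimit_mul_le (hreg.pow k) 0 ?_
  rw [Module.annihilator_eq_top_iff.2 h₀, Ideal.top_mul]
  exact h₁ (Ideal.pow_mem_pow hy t)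

theorem le_radical_torsionOf_of_pow_le_annihilator (hjac : I ≤ (⊥ : Ideal R).jacobson) {s : ℕ}
    [Module.Finite R M] {m : M} {z : Fin s → R} (hz : ∀ j, z j ∈ I)
    (hI : I ≤ (Ideal.torsionOf R M m ⊔ Ideal.span (Set.range z)).radical) {t : ℕ}
    (ht : ∀ i ≤ s, I ^ t ≤ Module.annihilator R (ExtColimit I i (ModuleCat.of R M))) :
    I ≤ (Ideal.torsionOf R M m).radical := by
  induction s generalizing M t with
  | zero => rwa [Set.range_eq_empty, Ideal.span_empty, sup_bot_eq] at hI
  | succ s ih =>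
    obtain ⟨n, hN⟩ := exists_pow_torsion_quotient_torsion_free I M
    set T := Submodule.torsionBySet R M (I ^ n : Ideal R)
    have hmem {m : M} (hm : m ∈ T) : ∀ a ∈ I ^ n, a • m = 0 := fun a ha =>
      (Submodule.mem_torsionBySet_iff _ _).1 hm ⟨a, ha⟩
    suffices hm : T.mkQ m = 0 from
      le_radical_torsionOf_iff.2 ⟨n, hmem ((Submodule.Quotient.mk_eq_zero T).1 hm)⟩
    have htN (i) (hi : i ≤ s + 1) :
        I ^ t ≤ Module.annihilator R (ExtColimit I i (ModuleCat.of R (M ⧸ T))) :=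
      (ht i hi).trans <|
        (ExtColimit.map I i (ModuleCat.ofHom T.mkQ)).annihilator_le_of_surjective <|
        map_surjective_of_ker_pow_torsion T.mkQ_surjective
          (fun a ha m hm => hmem (T.ker_mkQ.le hm) a ha) i
    have hJ : Ideal.torsionOf R M m ≤ Ideal.torsionOf R (M ⧸ T) (T.mkQ m) :=
      torsionOf_le_torsionOf_map T.mkQ m
    have htail : Ideal.span (Set.range (Fin.tail z)) ≤ I :=
      Ideal.span_le.2 (Set.range_subset_iff.2 fun j => hz j.succ)
    rw [span_range_fin_succ] at hI
    obtain ⟨y, hyI, hreg, hy⟩ := exists_isSMulRegular_le_radical hN (hz 0) htail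
      (hI.trans (Ideal.radical_mono (sup_le_sup_right hJ _)))
    refine eq_zero_of_isSMulRegular hjac hyI hreg (fun k => ?_)
      (subsingleton_extColimit_zero hN) (htN 1 (by omega))
    refine ih (t := t + t) (fun j => hz j.succ) ((hy k).trans (Ideal.radical_mono ?_))
      fun i hi => ?_
    · refine sup_le_sup_right (sup_le (torsionOf_le_torsionOf_map (Submodule.mkQ _) _) ?_) _
      rw [Ideal.span_singleton_le_iff_mem, Ideal.mem_torsionOf_iff]
      exact Module.mem_annihilator.1 (QuotSMulTop.mem_annihilator _ (y ^ k)) _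
    · rw [pow_add]
      exact (Ideal.mul_mono (htN i (by omega)) (htN (i + 1) (by omega))).trans
        (annihilator_extColimit_mul_le (hreg.pow k) i)

end TorsionCriterion

section ExtendingSurjectivity

open Abelian

universe u

variable {R : Type u} [CommRing R] {I : Ideal R}

theorem surjective_of_one_of_shortExact {S : ShortComplex (ModuleCat.{u} R)} (hS : S.ShortExact)
    {x : R} (hx : x ∈ I) {g : S.X₂ ⟶ S.X₁} (hgx : g ≫ S.f = x • 𝟙 S.X₂) {i : ℕ}
    (hg : Function.Surjective (ExtColimit.map I (i + 1) g))
    (h₀ : Function.Surjective (ExtColimit.of I i 1 S.X₂))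
    (h₁ : Function.Surjective (ExtColimit.of I (i + 1) 1 S.X₂)) :
    Function.Surjective (ExtColimit.of I i 1 S.X₃) := by
  intro z
  obtain ⟨u, hu⟩ := hg (ExtColimit.δ I i hS z)
  obtain ⟨e, rfl⟩ := h₁ u
  have he : (e.comp (Ext.mk₀ g) (add_zero _)).comp (Ext.mk₀ S.f) (add_zero _) = 0 := by
    rw [Ext.comp_assoc_of_third_deg_zero, Ext.mk₀_comp_mk₀, hgx, ← Ext.smul_eq_comp_mk₀]
    exact ExtColimit.smul_ext_eq_zero (by rwa [pow_one]) e
  obtain ⟨f, hf⟩ := Ext.covariant_sequence_exact₁ (quotPow I 1) hS _ he rfl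
  have hδ : ExtColimit.δ I i hS (z - ExtColimit.of I i 1 S.X₃ f) = 0 := by
    rw [map_sub, ExtColimit.δ_of, hf, ← hu, ExtColimit.map_of, sub_self]
  obtain ⟨w, hw⟩ := (ExtColimit.exact_map_δ hS _).1 hδ
  obtain ⟨e', rfl⟩ := h₀ w
  refine ⟨e'.comp (Ext.mk₀ S.g) (add_zero _) + f, ?_⟩
  rw [map_add, ← ExtColimit.map_of, hw, sub_add_cancel]

theorem surjective_of_one_quotSMulTop [IsNoetherianRing R] {M : Type u} [AddCommGroup M]
    [Module R M] {x : R} (hx : x ∈ I) (hM : ∀ m : M, x • m = 0 → ∀ a ∈ I, a • m = 0) {i : ℕ}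
    (h₀ : Function.Surjective (ExtColimit.of I i 1 (ModuleCat.of R M)))
    (h₁ : Function.Surjective (ExtColimit.of I (i + 1) 1 (ModuleCat.of R M))) :
    Function.Surjective (ExtColimit.of I i 1 (ModuleCat.of R (QuotSMulTop x M))) := by
  let π : M →ₗ[R] QuotSMulTop x M := Submodule.mkQ _
  let g : M →ₗ[R] LinearMap.ker π := (LinearMap.lsmul R M x).codRestrict _ fun m =>
    (Submodule.Quotient.mk_eq_zero _).2 (Submodule.smul_mem_pointwise_smul m x ⊤ trivial)
  have hg : Function.Surjective g := fun ⟨m, hm⟩ => by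
    obtain ⟨n, -, rfl⟩ := (Submodule.mem_smul_pointwise_iff_exists _ _ _).1
      ((Submodule.Quotient.mk_eq_zero _).1 hm)
    exact ⟨n, rfl⟩
  have hker : ∀ a ∈ I ^ 1, ∀ m ∈ LinearMap.ker g, a • m = 0 := fun a ha m hm =>
    hM m (congrArg Subtype.val hm) a (by rwa [pow_one] at ha)
  have hπ : Function.Surjective π := Submodule.mkQ_surjective _
  exact surjective_of_one_of_shortExact (LinearMap.shortExact_shortComplexKer hπ) hx
    (g := ModuleCat.ofHom g) rfl (map_surjective_of_ker_pow_torsion hg hker (i + 1)) h₀ h₁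

end ExtendingSurjectivity

section WeakSequences

variable {I : Ideal R} {M : Type} [AddCommGroup M] [Module R M] {c : ℕ}

theorem pSpan_zero (x : Fin (c + 1) → R) : pSpan M x 0 = ⊥ := by
  simp [pSpan]

theorem image_setOf_lt_succ {α : Type*} (x : Fin (c + 1) → α) (j : Fin c) :
    x '' {i | i < j.succ} = insert (x 0) (Fin.tail x '' {i | i < j}) := by
  have h : {i | i < j.succ} = insert 0 (Fin.succ '' {i | i < j}) := by
    ext i
    cases i using Fin.cases <;> simp [Fin.succ_ne_zero]
  rw [h, Set.image_insert_eq, Set.image_image]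
  rfl

theorem mk_mem_pSpan_tail_iff {x : Fin (c + 1) → R} {j : Fin c} {m : M} :
    (Submodule.Quotient.mk m : QuotSMulTop (x 0) M) ∈
      pSpan (QuotSMulTop (x 0) M) (Fin.tail x) j ↔ m ∈ pSpan M x j.succ := by
  let K : Submodule R M := Ideal.span (Fin.tail x '' {i | i < j}) • ⊤
  have hsucc : pSpan M x j.succ = Ideal.span {x 0} • ⊤ ⊔ K := by
    rw [pSpan, image_setOf_lt_succ, Ideal.span_insert, Submodule.sup_smul]
  have htail : pSpan (QuotSMulTop (x 0) M) (Fin.tail x) j = K.map (Submodule.mkQ _) := by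
    rw [pSpan, Submodule.map_smul'', Submodule.map_top, Submodule.range_mkQ]
  rw [htail, hsucc, Submodule.ideal_span_singleton_smul, ← Submodule.comap_map_mkQ]
  rfl

theorem isWeakSeq_succ_iff {x : Fin (c + 1) → R} :
    IsWeakSeq I M x ↔ (∀ m : M, x 0 • m = 0 → ∀ a ∈ I, a • m = 0) ∧
      IsWeakSeq I (QuotSMulTop (x 0) M) (Fin.tail x) := by
  have htail : IsWeakSeq I (QuotSMulTop (x 0) M) (Fin.tail x) ↔ ∀ (j : Fin c) (m : M),
      x j.succ • m ∈ pSpan M x j.succ → ∀ a ∈ I, a • m ∈ pSpan M x j.succ := by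
    simp only [← mk_mem_pSpan_tail_iff, Submodule.Quotient.mk_smul]
    exact forall_congr' fun j => Submodule.Quotient.forall _
  rw [htail]
  simp only [IsWeakSeq, Fin.forall_fin_succ, pSpan_zero, Submodule.mem_bot]

end WeakSequences

section CohomologyAndWeakSequences

variable {I : Ideal R}

theorem isWeakSeq_of_surjective_of_one [IsNoetherianRing R] (hjac : I ≤ (⊥ : Ideal R).jacobson)
    {M : Type} [AddCommGroup M] [Module R M] [Module.Finite R M] {c : ℕ} {x : Fin c → R}
    (hx : ∀ j, x j ∈ I) (hI : I ≤ (Ideal.span (Set.range x) ⊔ Module.annihilator R M).radical)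
    (hsurj : ∀ i < c, Function.Surjective (ExtColimit.of I i 1 (ModuleCat.of R M))) :
    IsWeakSeq I M x := by
  induction c generalizing M with
  | zero => exact fun i => i.elim0
  | succ c ih =>
    rw [span_range_fin_succ, sup_right_comm] at hI
    have hx₀ : ∀ m : M, x 0 • m = 0 → ∀ a ∈ I, a • m = 0 := by
      intro m hm
      have hle : Ideal.span {x 0} ⊔ Module.annihilator R M ≤ Ideal.torsionOf R M m :=
        sup_le ((Ideal.span_singleton_le_iff_mem _).2 hm) fun a ha =>
          Module.mem_annihilator.1 ha m
      obtain ⟨n, hn⟩ := le_radical_torsionOf_iff.1 <|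
        le_radical_torsionOf_of_pow_le_annihilator (t := 1) hjac (fun j => hx j.succ)
          (hI.trans (Ideal.radical_mono (sup_le_sup_right hle _))) fun i hi a ha =>
            Module.mem_annihilator.2 <| ExtColimit.smul_eq_zero_of_surjective_of_one
              (hsurj i (Nat.lt_succ_of_le hi)) (by rwa [pow_one] at ha)
      exact ExtColimit.surjective_of_one_iff.1 (hsurj 0 c.succ_pos) n m hn
    have hann : Ideal.span {x 0} ⊔ Module.annihilator R M ≤
        Module.annihilator R (QuotSMulTop (x 0) M) :=
      sup_le ((Ideal.span_singleton_le_iff_mem _).2 (QuotSMulTop.mem_annihilator M (x 0)))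
        (LinearMap.annihilator_le_of_surjective _ (Submodule.mkQ_surjective _))
    refine isWeakSeq_succ_iff.2 ⟨hx₀, ih (fun j => hx j.succ) ?_ fun i hi => ?_⟩
    · exact hI.trans (Ideal.radical_mono ((sup_le_sup_right hann _).trans_eq (sup_comm _ _)))
    · exact surjective_of_one_quotSMulTop (hx 0) hx₀ (hsurj i (by omega))
        (hsurj (i + 1) (by omega))

theorem mem_range_of_one_of_isWeakSeq {r c : ℕ} (hrc : r < c) {M : Type} [AddCommGroup M]
    [Module R M] {x : Fin c → R} (hx : IsWeakSeq I M x)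
    (hvan : ∀ i < r, Subsingleton (ExtColimit I i (ModuleCat.of R M)))
    {z : ExtColimit I r (ModuleCat.of R M)} (hz : ∀ j, x j • z = 0) :
    z ∈ LinearMap.range (ExtColimit.of I r 1 (ModuleCat.of R M)) := by
  induction r generalizing c M with
  | zero =>
    obtain ⟨c, rfl⟩ := Nat.exists_eq_add_one_of_ne_zero hrc.ne'
    have hz₀ : ∀ a ∈ I ^ 1, a • ExtColimit.zeroEval I _ z = 0 := fun a ha =>
      (isWeakSeq_succ_iff.1 hx).1 _ (by rw [← map_smul, hz 0, map_zero]) a (by rwa [pow_one] at ha)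
    obtain ⟨e, he⟩ := ExtColimit.exists_zeroEval_of_eq_iff.2 hz₀
    exact ⟨e, ExtColimit.zeroEval_injective I _ he⟩
  | succ r ih =>
    obtain ⟨c, rfl⟩ := Nat.exists_eq_add_one_of_ne_zero (Nat.ne_zero_of_lt hrc)
    obtain ⟨hx₀, hx⟩ := isWeakSeq_succ_iff.1 hx
    have hreg : IsSMulRegular M (x 0) := IsSMulRegular.of_right_eq_zero_of_smul fun m hm =>
      (ExtColimit.subsingleton_zero_iff (M := ModuleCat.of R M)).1 (hvan 0 r.succ_pos) 1 m
        fun a ha => hx₀ m hm a (by rwa [pow_one] at ha)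
    have hS := IsSMulRegular.smulShortComplex_shortExact (M := ModuleCat.of R M) hreg
    obtain ⟨w, rfl⟩ := (ExtColimit.exact_δ_map hS z).1 <|
      (ExtColimit.map_smul_id (x 0) z).trans (hz 0)
    have hδ := ExtColimit.δ_injective hS (hvan r r.lt_succ_self)
    obtain ⟨e, rfl⟩ := ih (Nat.succ_lt_succ_iff.1 hrc) hx
      (fun i hi => subsingleton_extColimit_quotSMulTop hreg (hvan i (by omega))
        (hvan (i + 1) (by omega)))
      (z := w) fun j => hδ <|
        ((ExtColimit.δ I r hS).map_smul _ w).trans ((hz j.succ).trans (map_zero _).symm)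
    exact ⟨e.comp hS.extClass rfl, (ExtColimit.δ_of hS e).symm⟩

end CohomologyAndWeakSequences

section RelativeSystemsOfParameters

variable {I : Ideal R} {M : Type} [AddCommGroup M] [Module R M] {c : ℕ}

theorem isRsop_iff {x : Fin c → R} : IsRsop I M x ↔
    (∀ j, x j ∈ I) ∧ I ≤ (Ideal.span (Set.range x) ⊔ Module.annihilator R M).radical := by
  refine and_congr_right fun hx => ⟨fun h => ?_, fun h => le_antisymm ?_ ?_⟩
  · exact (le_sup_left.trans Ideal.le_radical).trans h.ge
  · exact Ideal.radical_mono
      (sup_le_sup_right (Ideal.span_le.2 (Set.range_subset_iff.2 hx)) _)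
  · exact (Ideal.radical_isRadical _).radical_le_iff.2
      (sup_le h (le_sup_right.trans Ideal.le_radical))

theorem IsRsop.of_mem_radical {x y : Fin c → R} (hy : ∀ j, y j ∈ I)
    (hx : (Ideal.span (Set.range x) + Module.annihilator R M).radical =
      (I + Module.annihilator R M).radical)
    (hxy : ∀ j, x j ∈ (Ideal.span {y j} ⊔ Module.annihilator R M).radical) : IsRsop I M y := by
  refine isRsop_iff.2 ⟨hy, (le_sup_left.trans Ideal.le_radical).trans (hx.ge.trans ?_)⟩
  refine (Ideal.radical_isRadical _).radical_le_iff.2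
    (sup_le (Ideal.span_le.2 (Set.range_subset_iff.2 fun j => ?_))
      (le_sup_right.trans Ideal.le_radical))
  exact Ideal.radical_mono
    (sup_le_sup_right (Ideal.span_mono (Set.singleton_subset_iff.2 (Set.mem_range_self j))) _)
    (hxy j)

theorem IsRsop.pow {x : Fin c → R} (hx : IsRsop I M x) {n : ℕ} (hn : 0 < n) :
    IsRsop I M fun j => x j ^ n :=
  IsRsop.of_mem_radical (fun j => I.pow_mem_of_mem (hx.1 j) n hn) hx.2 fun _ =>
    ⟨n, Ideal.mem_sup_left (Ideal.mem_span_singleton_self _)⟩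

theorem IsAra.exists_isRsop (h : IsAra I M c) : ∃ x : Fin c → R, IsRsop I M x := by
  obtain ⟨x, hx⟩ := h.1
  have hxI (j) : x j ∈ (I + Module.annihilator R M).radical :=
    hx.le (Ideal.le_radical (Ideal.mem_sup_left (Ideal.subset_span ⟨j, rfl⟩)))
  choose n hn using hxI
  choose a ha b hb hab using fun j => Submodule.mem_sup.1 (hn j)
  refine ⟨a, .of_mem_radical ha hx fun j => ⟨n j, ?_⟩⟩
  rw [← hab j]
  exact add_mem (Ideal.mem_sup_left (Ideal.mem_span_singleton_self _)) (Ideal.mem_sup_right (hb j))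

end RelativeSystemsOfParameters

section BuchsbaumModules

variable {I : Ideal R} {M : Type} [AddCommGroup M] [Module R M] {c : ℕ}

theorem IsRelSurjBuchsbaum.isRelBuchsbaum [IsNoetherianRing R] [Module.Finite R M]
    (h : IsRelSurjBuchsbaum I M) (hjac : I ≤ (⊥ : Ideal R).jacobson) (hc : IsCd I M c)
    (ha : IsAra I M c) : IsRelBuchsbaum I M := by
  refine ⟨c, hc, ha, fun x hx => ?_⟩
  obtain ⟨hxI, hI⟩ := isRsop_iff.1 hx
  exact isWeakSeq_of_surjective_of_one hjac hxI hI fun i hi =>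
    (phiSurj_iff I i M).1 (h i ⟨c, hi, hc.1⟩)

theorem IsRelBuchsbaum.isRelQuasiBuchsbaum (h : IsRelBuchsbaum I M) : IsRelQuasiBuchsbaum I M := by
  obtain ⟨c, hc, ha, hweak⟩ := h
  exact ⟨c, hc, ha, fun x hx _ => hweak x hx⟩

theorem IsRelQuasiBuchsbaum.phiSurj (h : IsRelQuasiBuchsbaum I M) {i j : ℕ} (hij : i < j)
    (hj : Nontrivial (locH I j M)) (hvan : ∀ k < i, Subsingleton (locH I k M)) :
    PhiSurj I i M := by
  obtain ⟨c, hc, ha, hweak⟩ := h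
  have hic : i < c := hij.trans_le <| le_of_not_gt fun hcj =>
    not_subsingleton_iff_nontrivial.2 hj (hc.2 j hcj)
  refine (phiSurj_iff I i M).2 fun z => ?_
  obtain ⟨x, hx⟩ := ha.exists_isRsop
  obtain ⟨n, hn⟩ := ExtColimit.exists_pow_smul_eq_zero z
  have hxI (j) : x j ^ (n + 2) ∈ I ^ (n + 2) := Ideal.pow_mem_pow (hx.1 j) _
  have hxweak := hweak _ (hx.pow (n + 1).succ_pos) fun j =>
    Ideal.pow_le_pow_right (Nat.le_add_left 2 n) (hxI j)
  exact mem_range_of_one_of_isWeakSeq hic hxweak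
    (fun k hk => (subsingleton_locH_iff I k M).1 (hvan k hk))
    fun j => hn _ (Ideal.pow_le_pow_right (Nat.le_add_right n 2) (hxI j))

end BuchsbaumModules

/-- **Proposition 4.6.** Suppose `I` is contained in the Jacobson radical of `R`,
`cd(I,M) = ara(I,M)`, `r := grade(I,M) < c := cd(I,M)` and `H^i_I(M) = 0` for all
`i ≠ r, c`. Then the following are equivalent:
(i) `M` is `I`-relative surjective Buchsbaum;
(ii) `M` is `I`-relative Buchsbaum;
(iii) `M` is `I`-relative quasi Buchsbaum. -/
theorem proposition_4_6 [IsNoetherianRing R] (I : Ideal R)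
    (hjac : I ≤ (⊥ : Ideal R).jacobson)
    (M : Type) [AddCommGroup M] [Module R M] [Module.Finite R M]
    (hne : I • (⊤ : Submodule R M) ≠ ⊤)
    (c r : ℕ) (hc : IsCd I M c) (ha : IsAra I M c)
    (hr : IsGrade I M r) (hrc : r < c)
    (hvan : ∀ i : ℕ, i ≠ r → i ≠ c → Subsingleton (locH I i M)) :
    (IsRelSurjBuchsbaum I M ↔ IsRelBuchsbaum I M) ∧
      (IsRelBuchsbaum I M ↔ IsRelQuasiBuchsbaum I M) := by
  have hquasi : IsRelQuasiBuchsbaum I M → IsRelSurjBuchsbaum I M := by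
    rintro hq i ⟨j, hij, hj⟩
    rcases le_or_gt i r with hir | hri
    · exact hq.phiSurj hij hj fun k hk => hvan k (by omega) (by omega)
    · have hic : i ≠ c := by
        rintro rfl
        exact not_subsingleton_iff_nontrivial.2 hj (hc.2 j hij)
      have := (subsingleton_locH_iff I i M).1 (hvan i hri.ne' hic)
      exact (phiSurj_iff I i M).2 (Function.surjective_to_subsingleton _)
  have hsurj : IsRelSurjBuchsbaum I M → IsRelBuchsbaum I M := fun h => h.isRelBuchsbaum hjac hc ha
  exact ⟨⟨hsurj, fun h => hquasi h.isRelQuasiBuchsbaum⟩,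
    ⟨IsRelBuchsbaum.isRelQuasiBuchsbaum, fun h => hsurj (hquasi h)⟩⟩
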